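/- arXiv:1812.06643 — 2 statements merged into one kernel-verified Lean document; each statement's English description precedes it below -/
import Mathlib

section
/- For real a with |a| < 1 and real θ, if ln a denotes the natural logarithm of a (with 0 < a < 1), then ∑_{k=-∞}^∞ (-ln a)/(π((ln a)² + (θ + 2πk)²)) = (1 - a²)/(2π(1 + a² - 2a cos θ)). -/
open Real

lemma im_one_div_lift_add_int (L θ : ℝ) (k : ℤ) :
    (1 / ((θ + L * Complex.I) / (2 * π) + k : ℂ)).im =
      -(2 * π ^ 2) * (L / (π * (L ^ 2 + (θ + 2 * π * k) ^ 2))) := by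
  have hπ := pi_ne_zero
  have h : ((θ + L * Complex.I) / (2 * π) + k : ℂ) =
      ((1 / (2 * π) : ℝ) : ℂ) * (((θ + 2 * π * k : ℝ) : ℂ) + L * Complex.I) := by
    have : (π : ℂ) ≠ 0 := by exact_mod_cast hπ
    push_cast
    field_simp
    ring
  rw [h, one_div, mul_inv, ← Complex.ofReal_inv, Complex.im_ofReal_mul, Complex.inv_im,
    Complex.normSq_add_mul_I, add_comm (L ^ 2)]
  simp only [Complex.add_im, Complex.ofReal_im, Complex.im_ofReal_mul, Complex.I_im, zero_add,
    mul_one]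
  field_simp

lemma im_cot_of_exp_eq (a θ : ℝ) (z : ℂ)
    (hz : Complex.exp (2 * π * Complex.I * z) = a * Complex.exp (θ * Complex.I)) :
    (Complex.cot (π * z)).im = -((1 - a ^ 2) / (1 + a ^ 2 - 2 * a * Real.cos θ)) := by
  rw [Complex.cot_pi_eq_exp_ratio, hz, Complex.exp_mul_I, ← Complex.ofReal_cos,
    ← Complex.ofReal_sin, Complex.div_im]
  have h : Complex.normSq (Complex.I * (1 - a * (Real.cos θ + Real.sin θ * Complex.I))) =
      1 + a ^ 2 - 2 * a * Real.cos θ := by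
    simp only [Complex.normSq_apply, Complex.mul_re, Complex.mul_im, Complex.I_re, Complex.I_im,
      Complex.sub_re, Complex.sub_im, Complex.add_re, Complex.add_im, Complex.ofReal_re,
      Complex.ofReal_im, Complex.one_re, Complex.one_im]
    linear_combination a ^ 2 * Real.sin_sq_add_cos_sq θ
  rw [h, ← sub_div, ← neg_div]
  congr 1
  simp only [Complex.mul_re, Complex.mul_im, Complex.I_re, Complex.I_im,
    Complex.sub_re, Complex.sub_im, Complex.add_re, Complex.add_im, Complex.ofReal_re,
    Complex.ofReal_im, Complex.one_re, Complex.one_im]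
  linear_combination a ^ 2 * Real.sin_sq_add_cos_sq θ

lemma hasSum_cauchy_density_eq_im_cot {L : ℝ} (hL : 0 < L) (θ : ℝ) :
    HasSum (fun k : ℤ ↦ L / (π * (L ^ 2 + (θ + 2 * π * k) ^ 2)))
      (-(Complex.cot (π * ((θ + L * Complex.I) / (2 * π)))).im / (2 * π)) := by
  set z : ℂ := (θ + L * Complex.I) / (2 * π) with hz
  set f : ℤ → ℝ := fun k ↦ L / (π * (L ^ 2 + (θ + 2 * π * k) ^ 2)) with hf
  have hf0 (k : ℤ) : 0 ≤ f k := by positivity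
  have hfk (k : ℤ) : f k = (-1 / (2 * π ^ 2)) * (1 / (z + k)).im := by
    rw [hz, im_one_div_lift_add_int]
    simp only [hf]
    field_simp
  have hzim : 0 < z.im := by
    have : z = ((θ / (2 * π) : ℝ) : ℂ) + ((L / (2 * π) : ℝ) : ℂ) * Complex.I := by
      rw [hz]; push_cast; ring
    rw [this]
    simp only [Complex.add_im, Complex.ofReal_im, Complex.im_ofReal_mul, Complex.I_im, zero_add,
      mul_one]
    positivity
  have hzc := UpperHalfPlane.coe_mem_integerComplement ⟨z, hzim⟩
  have hs := (summable_cotTerm hzc).hasSum_iff_tendsto_nat.mpr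
    (tendsto_logDeriv_euler_cot_sub hzc)
  have hs' := (Complex.hasSum_im hs).mul_left (-1 / (2 * π ^ 2))
  have hpair : HasSum (fun n : ℕ ↦ f (n + 1) + f (-(n + 1)))
      ((-1 / (2 * π ^ 2)) * (π * Complex.cot (π * z) - 1 / z).im) := by
    refine Eq.mpr (congrArg (HasSum · _) (funext fun n ↦ ?_)) hs'
    rw [hfk, hfk, ← mul_add, ← Complex.add_im, add_comm]
    simp [cotTerm, sub_eq_add_neg, add_comm]
  have h1 : Summable fun n : ℕ ↦ f (n + 1) :=
    hpair.summable.of_nonneg_of_le (fun _ ↦ hf0 _) fun n ↦ le_add_of_nonneg_right (hf0 _)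
  have h2 : Summable fun n : ℕ ↦ f (-(n + 1)) :=
    hpair.summable.of_nonneg_of_le (fun _ ↦ hf0 _) fun n ↦ le_add_of_nonneg_left (hf0 _)
  convert h1.hasSum.of_add_one_of_neg_add_one h2.hasSum using 1
  have hadd := (h1.hasSum.add h2.hasSum).unique hpair
  have h0 := hfk 0
  rw [Int.cast_zero, add_zero] at h0
  rw [add_right_comm, hadd, h0, Complex.sub_im, Complex.im_ofReal_mul]
  field_simp
  ring

theorem poisson_kernel_sum (a : ℝ) (ha0 : 0 < a) (ha1 : a < 1) (θ : ℝ) :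
    ∑' k : ℤ, (-Real.log a) / (π * ((Real.log a) ^ 2 + (θ + 2 * π * k) ^ 2))
      = (1 - a ^ 2) / (2 * π * (1 + a ^ 2 - 2 * a * Real.cos θ)) := by
  have h := hasSum_cauchy_density_eq_im_cot (neg_pos.mpr (Real.log_neg ha0 ha1)) θ
  rw [im_cot_of_exp_eq a θ, neg_neg, div_div, mul_comm _ (2 * π)] at h
  · simpa only [neg_sq] using h.tsum_eq
  · have hπ : (π : ℂ) ≠ 0 := by exact_mod_cast pi_ne_zero
    have hexp : 2 * π * Complex.I * ((θ + ((-Real.log a : ℝ) : ℂ) * Complex.I) / (2 * π)) =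
        (Real.log a : ℂ) + θ * Complex.I := by
      push_cast
      field_simp
      linear_combination -(Real.log a : ℂ) * Complex.I_sq
    rw [hexp, Complex.exp_add, ← Complex.ofReal_exp, Real.exp_log ha0]
end

section
/- For real a with |a| < 1, ∑_{j=1}^∞ 1/((2j-1) + (-1)^j a)² = (π²/8)·sec²(πa/4)/(1 - tan(πa/4))². -/
open Real

lemma summable_one_div_nat_add_sq (x : ℝ) : Summable fun n : ℕ ↦ 1 / ((n : ℝ) + x) ^ 2 := by
  have h := (Real.summable_one_div_nat_add_rpow x 2).2 (by norm_num)
  simpa using h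

lemma hasDerivAt_pi_mul_cot_pi_mul {z : ℂ} (hz : Complex.sin (π * z) ≠ 0) :
    HasDerivAt (fun w : ℂ ↦ π * Complex.cot (π * w)) (-(π ^ 2 / Complex.sin (π * z) ^ 2)) z := by
  have hm : HasDerivAt (fun w : ℂ ↦ (π : ℂ) * w) π z := by
    simpa using (hasDerivAt_id z).const_mul (π : ℂ)
  have h := ((hm.ccos.div hm.csin hz).const_mul (π : ℂ))
  refine h.congr_deriv ?_
  have := Complex.sin_sq_add_cos_sq (π * z)
  field_simp
  linear_combination (-1 : ℂ) * this

lemma norm_one_div_sq_le {w : ℂ} {r : ℝ} (hr : 0 < r) (h : r ≤ ‖w‖) :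
    ‖1 / w ^ 2‖ ≤ 1 / r ^ 2 := by
  rw [norm_div, norm_one, norm_pow]
  gcongr

lemma half_add_nat_le_norm {z : ℂ} (hz : ‖z‖ < 1 / 2) (n : ℕ) :
    (n : ℝ) + 1 / 2 ≤ ‖z - (n + 1)‖ ∧ (n : ℝ) + 1 / 2 ≤ ‖z + (n + 1)‖ := by
  have hn : ‖((n : ℂ) + 1)‖ = n + 1 := by
    exact_mod_cast Complex.norm_natCast (n + 1)
  have h1 := norm_sub_norm_le ((n : ℂ) + 1) z
  have h2 := norm_sub_norm_le ((n : ℂ) + 1) (-z)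
  rw [norm_sub_rev] at h1
  rw [norm_neg, sub_neg_eq_add, add_comm ((n : ℂ) + 1) z] at h2
  constructor <;> linarith

lemma hasDerivAt_tsum_cotTerm {z : ℂ} (hz : ‖z‖ < 1 / 2) :
    HasDerivAt (fun w : ℂ ↦ ∑' n : ℕ, (1 / (w - (n + 1)) + 1 / (w + (n + 1))))
      (∑' n : ℕ, (-(1 / (z - (n + 1)) ^ 2) - 1 / (z + (n + 1)) ^ 2)) z := by
  refine hasDerivAt_tsum_of_isPreconnected (𝕜 := ℂ) (t := Metric.ball 0 (1 / 2)) (y₀ := 0)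
    (u := fun n : ℕ ↦ 2 * (1 / ((n : ℝ) + 1 / 2) ^ 2))
    (g := fun (n : ℕ) (w : ℂ) ↦ 1 / (w - (n + 1)) + 1 / (w + (n + 1)))
    (g' := fun (n : ℕ) (w : ℂ) ↦ -(1 / (w - (n + 1)) ^ 2) - 1 / (w + (n + 1)) ^ 2)
    ((summable_one_div_nat_add_sq _).mul_left 2)
    Metric.isOpen_ball (convex_ball _ _).isPreconnected ?_ ?_ (by simp) ?_ (by simpa using hz)
  · intro n w hw
    obtain ⟨h1, h2⟩ := half_add_nat_le_norm (mem_ball_zero_iff.1 hw) n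
    have h1' : w - (n + 1) ≠ 0 := norm_pos_iff.1 (lt_of_lt_of_le (by positivity) h1)
    have h2' : w + (n + 1) ≠ 0 := norm_pos_iff.1 (lt_of_lt_of_le (by positivity) h2)
    have := (((hasDerivAt_id w).sub_const ((n : ℂ) + 1)).inv h1').add
      (((hasDerivAt_id w).add_const ((n : ℂ) + 1)).inv h2')
    simp only [one_div]
    refine this.congr_deriv ?_
    simp only [id]
    ring
  · intro n w hw
    obtain ⟨h1, h2⟩ := half_add_nat_le_norm (mem_ball_zero_iff.1 hw) n
    have hn : (0 : ℝ) < n + 1 / 2 := by positivity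
    refine (norm_sub_le _ _).trans ?_
    rw [norm_neg, two_mul]
    exact add_le_add (norm_one_div_sq_le hn h1) (norm_one_div_sq_le hn h2)
  · simp only [zero_sub, zero_add, one_div, inv_neg, neg_add_cancel]
    exact summable_zero

lemma tsum_one_div_sub_sq_add_one_div_add_sq {x : ℝ} (h0 : 0 < x) (h1 : x < 1 / 2) :
    ∑' n : ℕ, (1 / (n + (1 - x)) ^ 2 + 1 / (n + (1 + x)) ^ 2)
      = π ^ 2 / Real.sin (π * x) ^ 2 - 1 / x ^ 2 := by
  have hx : (x : ℂ) ∈ Complex.integerComplement := by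
    rintro ⟨n, hn⟩
    have hn' : (n : ℝ) = x := by exact_mod_cast hn
    have : (0 : ℤ) < n := by exact_mod_cast hn'.symm ▸ h0
    have : n < (1 : ℤ) := by exact_mod_cast (by linarith : (n : ℝ) < 1)
    omega
  have hx0 : (x : ℂ) ≠ 0 := by exact_mod_cast h0.ne'
  have hsin : Complex.sin (π * x) ≠ 0 := sin_pi_mul_ne_zero hx
  have hnorm : ‖(x : ℂ)‖ < 1 / 2 := by
    rwa [Complex.norm_real, Real.norm_of_nonneg h0.le]
  have hL : HasDerivAt (fun w : ℂ ↦ π * Complex.cot (π * w) - 1 / w)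
      (-(π ^ 2 / Complex.sin (π * x) ^ 2) + 1 / (x : ℂ) ^ 2) x := by
    have := (hasDerivAt_pi_mul_cot_pi_mul hsin).sub (hasDerivAt_inv hx0)
    simp only [one_div]
    refine this.congr_deriv ?_
    ring
  have hev : (fun w : ℂ ↦ π * Complex.cot (π * w) - 1 / w) =ᶠ[nhds (x : ℂ)]
      fun w : ℂ ↦ ∑' n : ℕ, (1 / (w - (n + 1)) + 1 / (w + (n + 1))) := by
    filter_upwards [Complex.isOpen_compl_range_intCast.mem_nhds hx] with w hw
    exact cot_series_rep' hw
  have key := (hL.congr_of_eventuallyEq hev.symm).unique (hasDerivAt_tsum_cotTerm hnorm)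
  have hneg : ∑' n : ℕ, (-(1 / ((x : ℂ) - (n + 1)) ^ 2) - 1 / (x + (n + 1)) ^ 2)
      = -((∑' n : ℕ, (1 / ((n : ℝ) + (1 - x)) ^ 2 + 1 / (n + (1 + x)) ^ 2) : ℝ) : ℂ) := by
    rw [Complex.ofReal_tsum, ← tsum_neg]
    congr 1 with n
    push_cast
    rw [show ((x : ℂ) - (n + 1)) ^ 2 = (n + (1 - x)) ^ 2 by ring,
      show (x : ℂ) + (n + 1) = n + (1 + x) by ring]
    ring
  rw [hneg] at key
  apply Complex.ofReal_injective
  push_cast at key ⊢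
  linear_combination key

theorem differentiated_series_strip_exit (a : ℝ) (ha : |a| < 1) :
    ∑' j : ℕ, 1 / ((2 * (j : ℝ) + 1) - (-1) ^ j * a) ^ 2
      = (π ^ 2 / 8) * (1 / Real.cos (π * a / 4)) ^ 2 / (1 - Real.tan (π * a / 4)) ^ 2 := by
  obtain ⟨ha1, ha2⟩ := abs_lt.1 ha
  set x : ℝ := (1 - a) / 4 with hx
  have hax : a = 1 - 4 * x := by rw [hx]; ring
  have key := tsum_one_div_sub_sq_add_one_div_add_sq (x := x) (by linarith) (by linarith)
  have s1 := summable_one_div_nat_add_sq (1 - x)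
  have s2 := summable_one_div_nat_add_sq (1 + x)
  have s0 := summable_one_div_nat_add_sq x
  have e0 (n : ℕ) : 1 / ((2 * ((2 * n : ℕ) : ℝ) + 1) - (-1) ^ (2 * n) * a) ^ 2
      = 1 / 16 * (1 / ((n : ℝ) + x) ^ 2) := by
    rw [pow_mul, neg_one_sq, one_pow, hax, one_div_mul_one_div]
    push_cast
    ring_nf
  have e1 (n : ℕ) : 1 / ((2 * ((2 * n + 1 : ℕ) : ℝ) + 1) - (-1) ^ (2 * n + 1) * a) ^ 2
      = 1 / 16 * (1 / ((n : ℝ) + (1 - x)) ^ 2) := by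
    rw [pow_succ (-1 : ℝ), pow_mul, neg_one_sq, one_pow, hax, one_div_mul_one_div]
    push_cast
    ring_nf
  rw [← tsum_even_add_odd (by simpa only [e0] using s0.mul_left _)
    (by simpa only [e1] using s1.mul_left _)]
  simp only [e0, e1, tsum_mul_left]
  rw [s0.tsum_eq_zero_add]
  have hsplit : ∑' n : ℕ, 1 / (((n + 1 : ℕ) : ℝ) + x) ^ 2
      = ∑' n : ℕ, 1 / ((n : ℝ) + (1 + x)) ^ 2 := by
    congr 1 with n
    push_cast
    ring_nf
  rw [s1.tsum_add s2] at key
  have hcos : 0 < Real.cos (π * a / 4) :=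
    Real.cos_pos_of_mem_Ioo ⟨by nlinarith [pi_pos], by nlinarith [pi_pos]⟩
  have hsin : Real.sin (π * x) ^ 2 = (Real.cos (π * a / 4) - Real.sin (π * a / 4)) ^ 2 / 2 := by
    rw [show π * x = π / 4 - π * a / 4 by rw [hx]; ring, Real.sin_sub, Real.sin_pi_div_four,
      Real.cos_pi_div_four, ← mul_sub, mul_pow, div_pow, Real.sq_sqrt (by norm_num)]
    ring
  have hrhs : (π ^ 2 / 8) * (1 / Real.cos (π * a / 4)) ^ 2 / (1 - Real.tan (π * a / 4)) ^ 2
      = 1 / 16 * (π ^ 2 / Real.sin (π * x) ^ 2) := by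
    rw [hsin, mul_div_assoc, ← div_pow, div_div, mul_sub, mul_one,
      mul_comm (Real.cos _) (Real.tan _), Real.tan_mul_cos hcos.ne', one_div_pow]
    generalize (Real.cos (π * a / 4) - Real.sin (π * a / 4)) ^ 2 = d
    ring
  rw [hrhs, hsplit]
  push_cast
  rw [zero_add]
  linear_combination (1 / 16 : ℝ) * key
end
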